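/- arXiv:1807.05881 — 2 statements merged into one kernel-verified Lean document; each statement's English description precedes it below -/
import Mathlib

section
/- The set F_8 = {c ∈ L_8 : ⟨k_8,c⟩ = −2 and ⟨c,c⟩ = 0} has exactly 2160 elements. (This is the source of the bound in the paper's Corollary on simple family graphs: the simple family graph of a real weak del Pezzo surface has at most 2160 vertices.) -/
/-- The intersection form on the Neron-Severi lattice `L_r = ℤ^(r+1)` of a weak del Pezzo
surface of degree `9 - r` in a type 1 basis: `⟨v,w⟩ = v₀w₀ - v₁w₁ - ⋯ - vᵣwᵣ`. -/
def nsForm (r : ℕ) (v w : Fin (r + 1) → ℤ) : ℤ :=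
  v 0 * w 0 - ∑ i : Fin r, v i.succ * w i.succ

/-- The canonical class `k_r = -3e₀ + e₁ + ⋯ + e_r`. -/
def canK (r : ℕ) : Fin (r + 1) → ℤ := fun i => if i = 0 then -3 else 1

/-- The standard basis vector `e_j` of `L_r`. -/
def eVec (r : ℕ) (j : Fin (r + 1)) : Fin (r + 1) → ℤ := fun i => if i = j then 1 else 0

/-- The set of (-2)-classes `R_r = {c : ⟨k_r,c⟩ = 0, ⟨c,c⟩ = -2}`. -/
def Rset (r : ℕ) : Set (Fin (r + 1) → ℤ) :=
  {c | nsForm r (canK r) c = 0 ∧ nsForm r c c = -2}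

/-- The set of (-1)-classes `E_r = {c : ⟨k_r,c⟩ = -1, ⟨c,c⟩ = -1}`. -/
def Eset (r : ℕ) : Set (Fin (r + 1) → ℤ) :=
  {c | nsForm r (canK r) c = -1 ∧ nsForm r c c = -1}

/-- The set of minimal-family classes `F_r = {c : ⟨k_r,c⟩ = -2, ⟨c,c⟩ = 0}`. -/
def Fset (r : ℕ) : Set (Fin (r + 1) → ℤ) :=
  {c | nsForm r (canK r) c = -2 ∧ nsForm r c c = 0}

/-- Number of integer vectors of length `n` with sum `s` and sum of squares `q` (for `q ≤ 8`),
computed recursively with Cauchy-Schwarz pruning. -/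
def cntVec : ℕ → ℤ → ℤ → ℕ
  | 0, s, q => if s = 0 ∧ q = 0 then 1 else 0
  | n + 1, s, q => if ((n + 1 : ℕ) : ℤ) * q < s * s then 0 else
      ((List.range 5).map fun i : ℕ =>
        cntVec n (s - ((i : ℤ) - 2)) (q - ((i : ℤ) - 2) * ((i : ℤ) - 2))).sum

/-- The finite set counted by `cntVec`. -/
def vecs : (n : ℕ) → ℤ → ℤ → Finset (Fin n → ℤ)
  | 0, s, q => if s = 0 ∧ q = 0 then {Fin.elim0} else ∅
  | n + 1, s, q => if ((n + 1 : ℕ) : ℤ) * q < s * s then ∅ else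
      (Finset.range 5).biUnion fun i : ℕ =>
        (vecs n (s - ((i : ℤ) - 2)) (q - ((i : ℤ) - 2) * ((i : ℤ) - 2))).image
          (fun x => (Fin.cons ((i : ℤ) - 2) x : Fin (n + 1) → ℤ))

lemma card_cons_biUnion (n m : ℕ) (k : ℤ) (G : ℕ → Finset (Fin n → ℤ)) :
    ((Finset.range m).biUnion fun i : ℕ =>
        (G i).image (fun x => (Fin.cons ((i : ℤ) - k) x : Fin (n + 1) → ℤ))).card
      = ((List.range m).map fun i => (G i).card).sum := by
  rw [Finset.card_biUnion]
  · have h : ∀ i : ℕ, ((G i).image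
        (fun x => (Fin.cons ((i : ℤ) - k) x : Fin (n + 1) → ℤ))).card = (G i).card := fun i =>
      Finset.card_image_of_injective _ (Fin.cons_right_injective (α := fun _ => ℤ) _)
    simp only [h]
    rfl
  · intro i _ j _ hij
    rw [Function.onFun, Finset.disjoint_left]
    intro x hx hy
    simp only [Finset.mem_image] at hx hy
    obtain ⟨u, _, rfl⟩ := hx
    obtain ⟨v, _, h⟩ := hy
    have := congrFun h 0
    simp at this
    omega

lemma card_vecs (n : ℕ) : ∀ s q, (vecs n s q).card = cntVec n s q := by
  induction n with
  | zero => intro s q; simp only [vecs, cntVec]; split_ifs <;> simp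
  | succ n ih =>
    intro s q
    simp only [vecs, cntVec]
    split_ifs
    · simp
    · rw [card_cons_biUnion n 5 2 (fun i : ℕ => vecs n (s - ((i : ℤ) - 2))
        (q - ((i : ℤ) - 2) * ((i : ℤ) - 2)))]
      simp only [ih]

lemma mem_vecs (n : ℕ) : ∀ s q, q ≤ 8 → ∀ x : Fin n → ℤ,
    x ∈ vecs n s q ↔ ∑ i, x i = s ∧ ∑ i, x i * x i = q := by
  induction n with
  | zero =>
    intro s q _ x
    have hx : x = Fin.elim0 := Subsingleton.elim _ _
    simp only [vecs]
    split_ifs with h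
    · simp [hx, h.1, h.2]
    · simp only [Finset.univ_eq_empty, Finset.sum_empty, Finset.notMem_empty, false_iff]
      rintro ⟨h1, h2⟩
      exact h ⟨h1.symm, h2.symm⟩
  | succ n ih =>
    intro s q hq x
    simp only [vecs]
    split_ifs with h
    · simp only [Finset.notMem_empty, false_iff]
      rintro ⟨rfl, rfl⟩
      have := sq_sum_le_card_mul_sum_sq (s := Finset.univ) (f := x)
      simp only [Finset.card_univ, Fintype.card_fin, sq] at this
      exact absurd this (not_le.mpr h)
    · simp only [Finset.mem_biUnion, Finset.mem_range, Finset.mem_image]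
      rw [Fin.sum_univ_succ, Fin.sum_univ_succ]
      constructor
      · rintro ⟨i, _, y, hy, rfl⟩
        rw [ih _ _ (by nlinarith [mul_self_nonneg ((i : ℤ) - 2)])] at hy
        simp only [Fin.cons_zero, Fin.cons_succ]
        constructor <;> linarith [hy.1, hy.2]
      · rintro ⟨h1, h2⟩
        have h3 : 0 ≤ ∑ i : Fin n, x i.succ * x i.succ :=
          Finset.sum_nonneg fun i _ => mul_self_nonneg _
        have h4 : x 0 ≤ 2 := by nlinarith
        have h5 : -2 ≤ x 0 := by nlinarith
        obtain ⟨i, hi⟩ := Int.eq_ofNat_of_zero_le (a := x 0 + 2) (by linarith)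
        have hi' : (i : ℤ) - 2 = x 0 := by linarith
        refine ⟨i, by omega, fun j => x j.succ, ?_, ?_⟩
        · rw [ih _ _ (by nlinarith [mul_self_nonneg ((i : ℤ) - 2)]), hi']
          constructor <;> linarith
        · rw [hi']
          exact Fin.cons_self_tail x

/-- The rounded mean of the coordinates `c_1, …, c_8` of a class with `c_0 = a`. -/
def shiftOf (a : ℤ) : ℤ := (6 - 3 * a) / 8

/-- The possible vectors `(c_1, …, c_8)` for a class with `c_0 = a`. -/
def tails (a : ℤ) : Finset (Fin 8 → ℤ) :=
  (vecs 8 (2 - 3 * a - 8 * shiftOf a)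
    (a * a - 2 * shiftOf a * (2 - 3 * a) + 8 * (shiftOf a * shiftOf a))).image
      (fun x j => x j + shiftOf a)

lemma card_tails (a : ℤ) : (tails a).card = cntVec 8 (2 - 3 * a - 8 * shiftOf a)
    (a * a - 2 * shiftOf a * (2 - 3 * a) + 8 * (shiftOf a * shiftOf a)) := by
  rw [tails, Finset.card_image_of_injective, card_vecs]
  intro x y h
  funext j
  exact add_right_cancel (congrFun h j)

lemma mem_tails (a : ℤ) (h0 : 0 ≤ a) (h1 : a ≤ 11) (x : Fin 8 → ℤ) :
    x ∈ tails a ↔ ∑ i, x i = 2 - 3 * a ∧ ∑ i, x i * x i = a * a := by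
  have hq : a * a - 2 * shiftOf a * (2 - 3 * a) + 8 * (shiftOf a * shiftOf a) ≤ 8 := by
    unfold shiftOf
    interval_cases a <;> norm_num
  have key : ∀ (y : Fin 8 → ℤ) (t : ℤ), ∑ i, (y i + t) = ∑ i, y i + 8 * t ∧
      ∑ i, (y i + t) * (y i + t) = ∑ i, y i * y i + 2 * t * ∑ i, y i + 8 * (t * t) := by
    intro y t
    simp only [Fin.sum_univ_eight]
    constructor <;> ring
  generalize ht : shiftOf a = t at hq
  simp only [tails, ht, Finset.mem_image, mem_vecs 8 _ _ hq]
  constructor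
  · rintro ⟨y, ⟨e1, e2⟩, rfl⟩
    rw [(key y t).1, (key y t).2, e1, e2]
    constructor <;> ring
  · rintro ⟨e1, e2⟩
    refine ⟨fun j => x j + -t, ⟨?_, ?_⟩, ?_⟩
    · rw [(key x (-t)).1, e1]; ring
    · rw [(key x (-t)).2, e1, e2]; ring
    · funext j; ring

lemma Fset_eq : Fset 8 = (((Finset.range 12).biUnion fun i : ℕ =>
    (tails ((i : ℤ) - 0)).image
      (fun x => (Fin.cons ((i : ℤ) - 0) x : Fin 9 → ℤ)) : Finset (Fin 9 → ℤ)) :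
        Set (Fin 9 → ℤ)) := by
  ext c
  have hK : nsForm 8 (canK 8) c = -3 * c 0 - ∑ i : Fin 8, c i.succ := by
    simp [nsForm, canK, Fin.succ_ne_zero]
  simp only [Fset, Set.mem_ofPred_eq, hK]
  simp only [nsForm, Finset.mem_coe, Finset.mem_biUnion, Finset.mem_range, Finset.mem_image]
  constructor
  · rintro ⟨h1, h2⟩
    have h3 := sq_sum_le_card_mul_sum_sq (s := Finset.univ) (f := fun i : Fin 8 => c i.succ)
    simp only [Finset.card_univ, Fintype.card_fin, sq] at h3
    have e1 : ∑ i : Fin 8, c i.succ = 2 - 3 * c 0 := by linarith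
    have e2 : ∑ i : Fin 8, c i.succ * c i.succ = c 0 * c 0 := by linarith
    rw [e1, e2] at h3
    push_cast at h3
    have h4 : 0 ≤ c 0 := by nlinarith
    have h5 : c 0 ≤ 11 := by nlinarith
    obtain ⟨i, hi⟩ := Int.eq_ofNat_of_zero_le h4
    have hi' : (i : ℤ) - 0 = c 0 := by rw [hi]; simp
    refine ⟨i, by omega, fun j => c j.succ, ?_, ?_⟩
    · rw [hi', mem_tails _ h4 h5]
      exact ⟨e1, e2⟩
    · rw [hi']
      exact Fin.cons_self_tail c
  · rintro ⟨i, hi, y, hy, rfl⟩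
    have : (i : ℤ) ≤ 11 := by omega
    rw [mem_tails _ (by omega) (by omega)] at hy
    simp only [Fin.cons_zero, Fin.cons_succ]
    constructor <;> linarith [hy.1, hy.2]

lemma count_eq : ((List.range 12).map fun i : ℕ =>
    cntVec 8 (2 - 3 * ((i : ℤ) - 0) - 8 * shiftOf ((i : ℤ) - 0))
      (((i : ℤ) - 0) * ((i : ℤ) - 0) - 2 * shiftOf ((i : ℤ) - 0) * (2 - 3 * ((i : ℤ) - 0)) +
        8 * (shiftOf ((i : ℤ) - 0) * shiftOf ((i : ℤ) - 0)))).sum = 2160 := by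
  decide +kernel

/-- F_8 has exactly 2160 elements: a simple family graph of a real weak del Pezzo
surface has at most 2160 vertices. -/
theorem stmt_12 : (Fset 8).ncard = 2160 := by
  rw [Fset_eq, Set.ncard_coe_finset, card_cons_biUnion 8 12 0 (fun i : ℕ =>
    tails ((i : ℤ) - 0))]
  simp only [card_tails]
  exact count_eq
end

section
/- The number of unordered pairs {f, g} of distinct elements of F_8 = {c ∈ L_8 : ⟨k_8,c⟩ = −2 and ⟨c,c⟩ = 0} with ⟨f,g⟩ ≥ 2 is exactly 2262600. (This is the source of the bound in the paper's Corollary on simple family graphs: the simple family graph of a real weak del Pezzo surface has at most 2262600 edges, where an edge connects two families with intersection product at least two.) -/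
/-- Lists of `n` naturals `≤ 4` with given sum `s` and sum of squares `q`. -/
def genL : ℕ → ℕ → ℕ → List (List ℕ)
  | 0, s, q => bif Nat.beq s 0 && Nat.beq q 0 then [[]] else []
  | n + 1, s, q =>
    bif Nat.ble (s * s) ((n + 1) * q) then
      [0, 1, 2, 3, 4].flatMap fun m =>
        bif Nat.ble m s && Nat.ble (m * m) q then
          (genL n (s - m) (q - m * m)).map (List.cons m) else []
    else []

theorem cauchyL (l : List ℕ) : l.sum * l.sum ≤ l.length * (l.map fun x => x * x).sum := by
  induction l with
  | nil => simp
  | cons a l ih =>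
    simp only [List.sum_cons, List.length_cons, List.map_cons]
    generalize l.sum = s at *
    generalize (l.map fun x => x * x).sum = q at *
    generalize l.length = n at *
    zify at *
    rcases Nat.eq_zero_or_pos n with h | h
    · subst h
      have : (s : ℤ) = 0 := by
        push_cast at ih
        rw [zero_mul] at ih
        exact mul_self_eq_zero.1 (le_antisymm ih (mul_self_nonneg _))
      rw [this]; push_cast at *
      nlinarith [Int.natCast_nonneg q]
    · have hn : (0 : ℤ) < n := by exact_mod_cast h
      have : (0 : ℤ) ≤ n * (((n : ℤ) + 1) * (a * a + q) - (a + s) * (a + s)) := by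
        nlinarith [sq_nonneg ((n : ℤ) * a - s)]
      nlinarith [nonneg_of_mul_nonneg_right this hn]

theorem mem_genL (n : ℕ) : ∀ (s q : ℕ) (l : List ℕ), l ∈ genL n s q ↔
    l.length = n ∧ (∀ x ∈ l, x ≤ 4) ∧ l.sum = s ∧ (l.map fun x => x * x).sum = q := by
  induction n with
  | zero =>
    intro s q l
    simp only [genL]
    constructor
    · intro h
      cases hc : (Nat.beq s 0 && Nat.beq q 0) with
      | false => simp [hc] at h
      | true =>
        simp [hc] at h
        simp at hc
        subst h
        simp [hc.1, hc.2]
    · rintro ⟨h1, -, h3, h4⟩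
      have := List.length_eq_zero_iff.1 h1
      subst this
      simp at h3 h4
      simp [← h3, ← h4]
  | succ n ih =>
    intro s q l
    simp only [genL]
    constructor
    · intro h
      cases hc : (Nat.ble (s * s) ((n + 1) * q)) with
      | false => simp [hc] at h
      | true =>
        rw [hc, cond_true, List.mem_flatMap] at h
        obtain ⟨m, hm, h⟩ := h
        cases hd : (Nat.ble m s && Nat.ble (m * m) q) with
        | false => simp [hd] at h
        | true =>
          rw [hd, cond_true, List.mem_map] at h
          obtain ⟨t, ht, rfl⟩ := h
          obtain ⟨h1, h2, h3, h4⟩ := (ih _ _ _).1 ht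
          simp at hd
          have hm4 : m ≤ 4 := by simp at hm; omega
          refine ⟨by simp [h1], ?_, by simp [h3]; omega, by simp [h4]; omega⟩
          intro x hx
          rcases List.mem_cons.1 hx with rfl | hx
          · exact hm4
          · exact h2 x hx
    · rintro ⟨h1, h2, h3, h4⟩
      have hC := cauchyL l
      rw [h1, h3, h4] at hC
      rw [Nat.ble_eq_true_of_le hC, cond_true, List.mem_flatMap]
      cases l with
      | nil => simp at h1
      | cons m t =>
        simp at h1 h3 h4
        refine ⟨m, ?_, ?_⟩
        · have := h2 m (by simp)
          simp; omega
        · have e1 : Nat.ble m s = true := Nat.ble_eq_true_of_le (by omega)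
          have e2 : Nat.ble (m * m) q = true := Nat.ble_eq_true_of_le (by omega)
          rw [e1, e2]
          simp only [Bool.and_self, cond_true, List.mem_map]
          refine ⟨t, (ih _ _ _).2 ⟨h1, fun x hx => h2 x (by simp [hx]), by omega, by omega⟩, rfl⟩

theorem nodup_cons_flatMap (L : List ℕ) (hL : L.Nodup) (g : ℕ → List (List ℕ))
    (hg : ∀ m, (g m).Nodup) (hh : ∀ m, ∀ l ∈ g m, l.head? = some m) :
    (L.flatMap g).Nodup := by
  rw [List.nodup_flatMap]
  refine ⟨fun m _ => hg m, hL.imp ?_⟩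
  intro a b hab l ha hb
  have h1 := hh a l ha
  have h2 := hh b l hb
  rw [h1] at h2
  exact hab (Option.some.inj h2)

theorem nodup_genL (n : ℕ) : ∀ (s q : ℕ), (genL n s q).Nodup := by
  induction n with
  | zero =>
    intro s q
    simp only [genL]
    cases (Nat.beq s 0 && Nat.beq q 0) <;> simp
  | succ n ih =>
    intro s q
    simp only [genL]
    cases (Nat.ble (s * s) ((n + 1) * q)) with
    | false => simp
    | true =>
      rw [cond_true]
      apply nodup_cons_flatMap _ (by decide)
      · intro m
        cases (Nat.ble m s && Nat.ble (m * m) q) with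
        | false => simp
        | true => exact (ih _ _).map (List.cons_injective)
      · intro m l hl
        cases hd : (Nat.ble m s && Nat.ble (m * m) q) with
        | false => simp [hd] at hl
        | true =>
          simp [hd] at hl
          obtain ⟨a, -, rfl⟩ := hl
          rfl

/-- All classes of `F_8`, as lists `[d, m₁, …, m₈]`. -/
def FL : List (List ℕ) :=
  [1, 2, 3, 4, 5, 6, 7, 8, 9, 10, 11].flatMap fun d =>
    (genL 8 (3 * d - 2) (d * d)).map (List.cons d)

theorem nodup_FL : FL.Nodup := by
  apply nodup_cons_flatMap _ (by decide)
  · intro d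
    exact (nodup_genL _ _ _).map (List.cons_injective)
  · intro m l hl
    simp at hl
    obtain ⟨a, -, rfl⟩ := hl
    rfl

def gt2 (l g : List ℕ) : Bool :=
  Nat.ble (2 + (l.getD 1 0 * g.getD 1 0 + l.getD 2 0 * g.getD 2 0 + l.getD 3 0 * g.getD 3 0
    + l.getD 4 0 * g.getD 4 0 + l.getD 5 0 * g.getD 5 0 + l.getD 6 0 * g.getD 6 0
    + l.getD 7 0 * g.getD 7 0 + l.getD 8 0 * g.getD 8 0)) (l.getD 0 0 * g.getD 0 0)

def tri : List (Fin 8 × Fin 8 × Fin 8) :=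
  (List.finRange 8).flatMap fun i => (List.finRange 8).flatMap fun j =>
    ((List.finRange 8).filter fun k => i < j ∧ j < k).map fun k => (i, j, k)

def chk (l : List ℕ) : Bool :=
  (tri.any fun t => Nat.ble (l.getD 0 0 + 1)
    (l.getD (t.1.val + 1) 0 + l.getD (t.2.1.val + 1) 0 + l.getD (t.2.2.val + 1) 0)) ||
  Nat.beq (FL.countP (gt2 l)) 2095

theorem len_FL : FL.length = 2160 := by decide +kernel

theorem chk_FL : FL.all chk = true := by decide +kernel

def toV (l : List ℕ) : Fin 9 → ℤ :=
  fun i => if i = 0 then (l.getD 0 0 : ℤ) else -(l.getD i.val 0 : ℤ)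

theorem len_of_mem {l : List ℕ} (h : l ∈ FL) : l.length = 9 := by
  simp only [FL, List.mem_flatMap, List.mem_map] at h
  obtain ⟨d, -, t, ht, rfl⟩ := h
  simp [((mem_genL _ _ _ _).1 ht).1]

theorem toV_inj {l g : List ℕ} (hl : l.length = 9) (hg : g.length = 9) (h : toV l = toV g) :
    l = g := by
  apply List.ext_getElem (by omega)
  intro i h1 h2
  have := congrFun h ⟨i, by omega⟩
  simp only [toV] at this
  rw [← List.getD_eq_getElem l 0 h1, ← List.getD_eq_getElem g 0 h2]
  split_ifs at this with h0
  · have hz : i = 0 := by simpa [Fin.ext_iff] using h0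
    subst hz
    exact_mod_cast this
  · have := neg_injective this
    exact_mod_cast this

theorem form_toV (l g : List ℕ) : 2 ≤ nsForm 8 (toV l) (toV g) ↔ gt2 l g = true := by
  simp only [gt2, Nat.ble_eq, nsForm, Fin.sum_univ_eight]
  zify
  simp [toV, Fin.ext_iff]
  constructor <;> intro h <;> linarith

theorem toV_mem {l : List ℕ} (h : l ∈ FL) : toV l ∈ Fset 8 := by
  simp only [FL, List.mem_flatMap, List.mem_map] at h
  obtain ⟨d, hd, t, ht, rfl⟩ := h
  obtain ⟨h1, h2, h3, h4⟩ := (mem_genL _ _ _ _).1 ht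
  have hd1 : 1 ≤ d := by simp at hd; omega
  match t, h1 with
  | [a1, a2, a3, a4, a5, a6, a7, a8], _ =>
    simp at h3 h4
    have hsum : a1 + (a2 + (a3 + (a4 + (a5 + (a6 + (a7 + a8)))))) + 2 = 3 * d := by omega
    zify at hsum h4
    constructor
    · simp [nsForm, canK, toV, Fin.sum_univ_eight]
      linarith
    · simp [nsForm, toV, Fin.sum_univ_eight]
      linarith

theorem bound_aux (d : ℤ) (m : Fin 8 → ℤ) (h1 : ∑ i, m i = 3 * d - 2)
    (h2 : ∑ i, m i ^ 2 = d * d) : 1 ≤ d ∧ d ≤ 11 ∧ ∀ i, 0 ≤ m i ∧ m i ≤ 4 := by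
  have hc := sq_sum_le_card_mul_sum_sq (s := (Finset.univ : Finset (Fin 8))) (f := m)
  rw [h1, h2] at hc
  simp at hc
  have hd1 : 1 ≤ d := by nlinarith
  have hd2 : d ≤ 11 := by nlinarith
  refine ⟨hd1, hd2, fun i => ?_⟩
  have hc := sq_sum_le_card_mul_sum_sq (s := (Finset.univ.erase i : Finset (Fin 8))) (f := m)
  have e1 := Finset.add_sum_erase Finset.univ m (Finset.mem_univ i)
  have e2 := Finset.add_sum_erase Finset.univ (fun j => m j ^ 2) (Finset.mem_univ i)
  rw [h1] at e1
  simp only [h2] at e2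
  rw [Finset.card_erase_of_mem (Finset.mem_univ i)] at hc
  simp only [Finset.card_univ, Fintype.card_fin] at hc
  generalize ∑ x ∈ Finset.univ.erase i, m x = S at *
  generalize ∑ x ∈ Finset.univ.erase i, m x ^ 2 = Q at *
  generalize m i = x at *
  have hS : S = 3 * d - 2 - x := by linarith
  have hQ : Q = d * d - x ^ 2 := by linarith
  subst hS hQ
  clear h1 h2 e1 e2
  push_cast at hc
  constructor
  · by_contra hx
    interval_cases d <;> nlinarith
  · by_contra hx
    interval_cases d <;> nlinarith

theorem mem_toV {c : Fin 9 → ℤ} (h : c ∈ Fset 8) : ∃ l ∈ FL, toV l = c := by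
  obtain ⟨h1, h2⟩ := h
  obtain ⟨hd1, hd2, hm⟩ := bound_aux (c 0) (fun i => - c i.succ)
    (by simp [nsForm, canK, Fin.sum_univ_eight] at h1 ⊢; linarith)
    (by simp [nsForm, Fin.sum_univ_eight] at h2 ⊢; linarith)
  obtain ⟨d, hd⟩ := Int.eq_ofNat_of_zero_le (show 0 ≤ c 0 by omega)
  choose m hmm using fun i => Int.eq_ofNat_of_zero_le (hm i).1
  have hms : ∀ i : Fin 8, c i.succ = - (m i : ℤ) := fun i => by rw [← hmm i]; simp
  simp only [nsForm, canK, Fin.sum_univ_eight, hms, hd] at h1 h2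
  simp [Fin.ext_iff] at h1 h2
  refine ⟨d :: [m 0, m 1, m 2, m 3, m 4, m 5, m 6, m 7], ?_, ?_⟩
  · simp only [FL, List.mem_flatMap, List.mem_map]
    refine ⟨d, by simp; omega, _, ?_, rfl⟩
    rw [mem_genL]
    refine ⟨rfl, ?_, ?_, ?_⟩
    · have : ∀ i, m i ≤ 4 := fun i => by
        have := (hm i).2
        rw [hmm i] at this
        exact_mod_cast this
      simp [this]
    · simp; omega
    · simp
      zify
      linarith
  · funext i
    refine Fin.cases ?_ (fun j => ?_) i
    · simp [toV, hd]
    · rw [hms]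
      fin_cases j <;> simp [toV, Fin.ext_iff]

def FS : Finset (Fin 9 → ℤ) := (FL.map toV).toFinset

theorem nodup_map : (FL.map toV).Nodup :=
  nodup_FL.map_on fun _ hx _ hy h => toV_inj (len_of_mem hx) (len_of_mem hy) h

theorem mem_FS (c : Fin 9 → ℤ) : c ∈ FS ↔ c ∈ Fset 8 := by
  simp only [FS, List.mem_toFinset, List.mem_map]
  constructor
  · rintro ⟨l, hl, rfl⟩
    exact toV_mem hl
  · exact mem_toV

theorem card_FS : FS.card = 2160 := by
  rw [FS, List.toFinset_card_of_nodup nodup_map, List.length_map, len_FL]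

def deg (f : Fin 9 → ℤ) : ℕ := (FS.filter fun g => 2 ≤ nsForm 8 f g).card

theorem deg_toV (l : List ℕ) : deg (toV l) = FL.countP (gt2 l) := by
  have : (FS.filter fun g => 2 ≤ nsForm 8 (toV l) g)
      = ((FL.map toV).filter fun g => decide (2 ≤ nsForm 8 (toV l) g)).toFinset := by
    ext g; simp [FS]
  rw [deg, this, List.toFinset_card_of_nodup (nodup_map.filter _),
    ← List.countP_eq_length_filter, List.countP_map]
  congr 1
  funext g
  simp [Function.comp, form_toV]

theorem ns_comm (f g : Fin 9 → ℤ) : nsForm 8 f g = nsForm 8 g f := by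
  simp [nsForm, mul_comm]

theorem ns_add (f g h : Fin 9 → ℤ) : nsForm 8 f (g + h) = nsForm 8 f g + nsForm 8 f h := by
  simp [nsForm, mul_add, Finset.sum_add_distrib]; ring

theorem ns_smul (f g : Fin 9 → ℤ) (a : ℤ) : nsForm 8 f (a • g) = a * nsForm 8 f g := by
  simp only [nsForm, Fin.sum_univ_eight, Pi.smul_apply, smul_eq_mul]; ring

/-- Reflection in a root. -/
def reflV (α f : Fin 9 → ℤ) : Fin 9 → ℤ := f + nsForm 8 α f • α

theorem rfl_form (α f g : Fin 9 → ℤ) (h : nsForm 8 α α = -2) :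
    nsForm 8 (reflV α f) (reflV α g) = nsForm 8 f g := by
  simp only [reflV, ns_add, ns_smul]
  rw [ns_comm _ g, ns_comm _ α, ns_add, ns_add, ns_smul, ns_smul, ns_comm g α, ns_comm g f, h]
  ring

theorem rfl_rfl (α f : Fin 9 → ℤ) (h : nsForm 8 α α = -2) : reflV α (reflV α f) = f := by
  simp only [reflV, ns_add, ns_smul, h]
  module

theorem rfl_mem (α f : Fin 9 → ℤ) (h : nsForm 8 α α = -2) (hk : nsForm 8 (canK 8) α = 0)
    (hf : f ∈ Fset 8) : reflV α f ∈ Fset 8 := by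
  refine ⟨?_, (rfl_form α f f h).trans hf.2⟩
  rw [reflV, ns_add, ns_smul, hk, hf.1]; ring

theorem deg_rfl (α f : Fin 9 → ℤ) (h : nsForm 8 α α = -2) (hk : nsForm 8 (canK 8) α = 0) :
    deg (reflV α f) = deg f := by
  symm
  unfold deg
  apply Finset.card_nbij' (reflV α) (reflV α)
  · intro g hg
    simp only [Finset.coe_filter, Set.mem_ofPred_eq, mem_FS] at hg ⊢
    exact ⟨rfl_mem α g h hk hg.1, by rw [rfl_form α f g h]; exact hg.2⟩
  · intro g hg
    simp only [Finset.coe_filter, Set.mem_ofPred_eq, mem_FS] at hg ⊢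
    refine ⟨rfl_mem α g h hk hg.1, ?_⟩
    rw [← rfl_form α f _ h, rfl_rfl α g h]; exact hg.2
  · intro g _; exact rfl_rfl α g h
  · intro g _; exact rfl_rfl α g h

def root (i j k : Fin 8) : Fin 9 → ℤ :=
  fun t => if t = 0 then 1 else if t = i.succ ∨ t = j.succ ∨ t = k.succ then -1 else 0

theorem root_sq : ∀ i j k : Fin 8, i < j → j < k →
    nsForm 8 (root i j k) (root i j k) = -2 ∧ nsForm 8 (canK 8) (root i j k) = 0 := by
  decide +kernel

theorem root_form (i j k : Fin 8) (hij : i < j) (hjk : j < k) (f : Fin 9 → ℤ) :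
    nsForm 8 (root i j k) f = f 0 + f i.succ + f j.succ + f k.succ := by
  have h1 : i ≠ j := hij.ne
  have h2 : j ≠ k := hjk.ne
  have h3 : i ≠ k := (hij.trans hjk).ne
  have : ∀ t : Fin 8, root i j k t.succ * f t.succ =
      -((if t = i then f t.succ else 0) + (if t = j then f t.succ else 0)
        + (if t = k then f t.succ else 0)) := by
    intro t
    simp only [root, Fin.succ_ne_zero, if_false, Fin.succ_inj]
    by_cases a : t = i
    · subst a; simp [h1, h3]
    · by_cases b : t = j
      · subst b; simp [h2, a]
      · by_cases c : t = k
        · subst c; simp [a, b]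
        · simp [a, b, c]
  simp only [nsForm, this, Finset.sum_neg_distrib, Finset.sum_add_distrib,
    Finset.sum_ite_eq', Finset.mem_univ, if_true]
  simp [root]; ring

theorem deg_eq (n : ℕ) : ∀ f ∈ Fset 8, f 0 ≤ n → deg f = 2095 := by
  induction n with
  | zero =>
    intro f hf h
    obtain ⟨l, hl, rfl⟩ := mem_toV hf
    simp only [FL, List.mem_flatMap, List.mem_map] at hl
    obtain ⟨d, hd, t, ht, rfl⟩ := hl
    simp [toV] at h hd
    omega
  | succ n ih =>
    intro f hf h
    obtain ⟨l, hl, rfl⟩ := mem_toV hf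
    have hc := List.all_eq_true.1 chk_FL l hl
    rw [chk, Bool.or_eq_true] at hc
    rcases hc with hc | hc
    · rw [List.any_eq_true] at hc
      obtain ⟨⟨i, j, k⟩, ht, hc⟩ := hc
      simp only [tri, List.mem_flatMap, List.mem_map, List.mem_filter] at ht
      obtain ⟨ia, -, ja, -, ka, ⟨-, h1⟩, h2⟩ := ht
      simp only [Prod.mk.injEq] at h2
      obtain ⟨rfl, rfl, rfl⟩ := h2
      simp only [decide_eq_true_eq] at h1
      obtain ⟨hij, hjk⟩ := h1
      obtain ⟨r1, r2⟩ := root_sq ia ja ka hij hjk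
      rw [← deg_rfl (root ia ja ka) _ r1 r2]
      apply ih _ (rfl_mem _ _ r1 r2 hf)
      have hr : root ia ja ka 0 = 1 := by simp [root]
      simp only [reflV, Pi.add_apply, Pi.smul_apply, root_form ia ja ka hij hjk, hr, smul_eq_mul]
      simp only [Nat.ble_eq] at hc
      zify at hc
      push_cast at h
      have e : ∀ t : Fin 8, toV l t.succ = -(l.getD (t.val + 1) 0 : ℤ) := fun t => by
        simp [toV]
      have e0 : toV l 0 = (l.getD 0 0 : ℤ) := by simp [toV]
      rw [e, e, e]
      rw [e0] at h ⊢
      linarith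
    · rw [deg_toV]
      exact Nat.eq_of_beq_eq_true hc

def Gr : SimpleGraph FS where
  Adj f g := 2 ≤ nsForm 8 f.1 g.1
  symm := ⟨fun f g h => by rw [ns_comm]; exact h⟩
  loopless := ⟨fun f h => by
    have := ((mem_FS f.1).1 f.2).2
    omega⟩

instance : DecidableRel Gr.Adj := fun f g =>
  inferInstanceAs (Decidable (2 ≤ nsForm 8 f.1 g.1))

theorem Gr_degree (f : FS) : Gr.degree f = 2095 := by
  have hf := (mem_FS f.1).1 f.2
  rw [← deg_eq (f.1 0).toNat f.1 hf (Int.self_le_toNat _), deg,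
    ← SimpleGraph.card_neighborFinset_eq_degree]
  apply Finset.card_bij (fun g _ => g.1)
  · intro g hg
    rw [SimpleGraph.mem_neighborFinset] at hg
    exact Finset.mem_filter.2 ⟨g.2, hg⟩
  · intro a _ b _ h
    exact Subtype.ext h
  · intro b hb
    obtain ⟨h1, h2⟩ := Finset.mem_filter.1 hb
    exact ⟨⟨b, h1⟩, (SimpleGraph.mem_neighborFinset _ _ _).2 h2, rfl⟩

theorem Gr_edges : Gr.edgeFinset.card = 2262600 := by
  have := Gr.sum_degrees_eq_twice_card_edges
  simp only [Gr_degree, Finset.sum_const, Finset.card_univ, Fintype.card_coe, card_FS,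
    smul_eq_mul] at this
  omega

/-- The number of unordered pairs {f,g} of distinct elements of F_8 with ⟨f,g⟩ ≥ 2
is exactly 2262600: a simple family graph of a real weak del Pezzo surface has at most
2262600 edges. -/
theorem stmt_13 :
    {p : Set (Fin 9 → ℤ) |
      ∃ f ∈ Fset 8, ∃ g ∈ Fset 8, f ≠ g ∧ 2 ≤ nsForm 8 f g ∧ p = {f, g}}.ncard
      = 2262600 := by
  have hS : {p : Set (Fin 9 → ℤ) |
      ∃ f ∈ Fset 8, ∃ g ∈ Fset 8, f ≠ g ∧ 2 ≤ nsForm 8 f g ∧ p = {f, g}}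
      = (fun e : Sym2 FS => {x : Fin 9 → ℤ | ∃ y ∈ e, y.1 = x}) '' (Gr.edgeFinset : Set _) := by
    ext p
    constructor
    · rintro ⟨f, hf, g, hg, -, h, rfl⟩
      refine ⟨s(⟨f, (mem_FS f).2 hf⟩, ⟨g, (mem_FS g).2 hg⟩), ?_, ?_⟩
      · rw [SimpleGraph.coe_edgeFinset, SimpleGraph.mem_edgeSet]
        exact h
      · ext x
        simp [eq_comm]
    · rintro ⟨e, he, rfl⟩
      induction e using Sym2.ind with
      | _ f g =>
      rw [SimpleGraph.coe_edgeFinset, SimpleGraph.mem_edgeSet] at he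
      refine ⟨f.1, (mem_FS _).1 f.2, g.1, (mem_FS _).1 g.2, ?_, he, ?_⟩
      · intro h
        exact he.ne (Subtype.ext h)
      · ext x
        simp [eq_comm]
  rw [hS, Set.ncard_image_of_injective, Set.ncard_coe_finset, Gr_edges]
  intro e e2 h
  apply Sym2.ext
  intro y
  have := Set.ext_iff.1 h y.1
  constructor
  · intro hy
    obtain ⟨z, hz, hzy⟩ := this.1 ⟨y, hy, rfl⟩
    rwa [← Subtype.ext hzy]
  · intro hy
    obtain ⟨z, hz, hzy⟩ := this.2 ⟨y, hy, rfl⟩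
    rwa [← Subtype.ext hzy]
end
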